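/- arXiv:2509.06895 — 4 statements merged into one kernel-verified Lean document; each statement's English description precedes it below -/
import Mathlib

section
/- Let f : R → S be an injective homomorphism of commutative Noetherian rings. Then for every associated prime P of R there exists an associated prime Q of S such that the preimage f⁻¹(Q) equals P. -/
/-!
An associated prime `P = √(0 : x)` is the unique minimal prime of `(0 : x)`. Injectivity identifies
`(0 : x)` with the contraction of the annihilator `(0 : f x)`, and a minimal prime of a contracted
ideal is the contraction of a minimal prime. Over a Noetherian ring, a minimal prime of an
annihilator is itself an annihilator, hence an associated prime.
-/

section

variable {R M : Type*} [CommSemiring R] [AddCommMonoid M] [Module R M]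
  {N : Submodule R M} {P : Ideal R}

theorem exists_mem_minimalPrimes_colon_of_isAssociatedPrime (hP : N.IsAssociatedPrime P) :
    ∃ x, P ∈ (N.colon {x}).minimalPrimes := by
  have := hP.toIsPrime
  obtain ⟨x, hx⟩ := hP.eq_radical_colon
  refine ⟨x, ?_⟩
  rw [← Ideal.radical_minimalPrimes, ← hx, Ideal.minimalPrimes_eq_subsingleton_self]
  exact Set.mem_singleton P

theorem isAssociatedPrime_of_mem_minimalPrimes_colon [IsNoetherianRing R] {x : M}
    (hP : P ∈ (N.colon {x}).minimalPrimes) : N.IsAssociatedPrime P :=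
  Submodule.isAssociatedPrime_iff.mpr
    ⟨hP.isPrime, Submodule.exists_eq_colon_of_mem_minimalPrimes hP⟩

end

theorem comap_colon_image {R S M N : Type*} [Semiring R] [Semiring S]
    [AddCommMonoid M] [AddCommMonoid N] [Module R M] [Module S N] {f : R →+* S}
    (g : M →ₛₗ[f] N) (L : Submodule S N) (s : Set M) :
    (L.colon (g '' s)).comap f = (L.comap g).colon s := by
  ext r
  simp only [Ideal.mem_comap, Submodule.mem_colon, Set.forall_mem_image, Submodule.mem_comap,
    map_smulₛₗ]

section

variable {R S M N : Type*} [CommSemiring R] [CommSemiring S] [IsNoetherianRing S]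
  [AddCommMonoid M] [AddCommMonoid N] [Module R M] [Module S N] {f : R →+* S}

theorem exists_isAssociatedPrime_comap_eq (g : M →ₛₗ[f] N) (L : Submodule S N)
    {P : Ideal R} (hP : (L.comap g).IsAssociatedPrime P) :
    ∃ Q : Ideal S, L.IsAssociatedPrime Q ∧ Q.comap f = P := by
  obtain ⟨x, hx⟩ := exists_mem_minimalPrimes_colon_of_isAssociatedPrime hP
  rw [← comap_colon_image, Set.image_singleton] at hx
  obtain ⟨Q, hQ, hQP⟩ := Ideal.exists_minimalPrimes_comap_eq f P hx
  exact ⟨Q, isAssociatedPrime_of_mem_minimalPrimes_colon hQ, hQP⟩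

theorem associated_prime_lifts_along_injective_general
    (g : M →ₛₗ[f] N) (hg : Function.Injective g)
    {P : Ideal R} (hP : P ∈ associatedPrimes R M) :
    ∃ Q ∈ associatedPrimes S N, Q.comap f = P := by
  have comap_bot : (⊥ : Submodule S N).comap g = ⊥ := LinearMap.ker_eq_bot_of_injective hg
  exact exists_isAssociatedPrime_comap_eq g ⊥ (comap_bot ▸ hP)

end

/-- If `f : R → S` is an injective homomorphism of commutative Noetherian rings, then
every associated prime `P` of `R` is the contraction of some associated prime `Q` of `S`. -/
theorem associated_prime_lifts_along_injective
    {R S : Type*} [CommRing R] [CommRing S]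
    [IsNoetherianRing R] [IsNoetherianRing S]
    (f : R →+* S) (hf : Function.Injective f)
    (P : Ideal R) (hP : P ∈ associatedPrimes R R) :
    ∃ Q ∈ associatedPrimes S S, Q.comap f = P :=
  associated_prime_lifts_along_injective_general f.toSemilinearMap hf hP
end

section
/- Let R be a commutative Noetherian ring and P a prime ideal of R containing every zero divisor of R. Let U be a subset of R whose annihilator I = {a ∈ R : a·u = 0 for all u ∈ U} satisfies I ⊆ P. If P is a minimal prime over I (that is, P is minimal among prime ideals containing I), then there exists an integer s ≥ 1 with P^s ⊆ I, and consequently the radical of I equals P. -/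
/-!
Every element of a minimal prime over the annihilator of a module kills a nonzero element of that
module. So a prime `P` that contains all zero divisors contains every minimal prime over the
annihilator; if `P` is itself one of them, it is the only one, and hence equals the radical.
-/

section

variable {R M : Type*} [CommSemiring R] [AddCommMonoid M] [Module R M]

theorem exists_smul_eq_zero_of_mem_minimalPrimes_annihilator {N : Submodule R M} {Q : Ideal R}
    (hQ : Q ∈ N.annihilator.minimalPrimes) {x : R} (hx : x ∈ Q) :
    ∃ m ∈ N, m ≠ 0 ∧ x • m = 0 := by
  obtain ⟨y, hy, hxy⟩ := Ideal.exists_mul_mem_of_mem_minimalPrimes hQ hx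
  rw [Submodule.mem_annihilator] at hy hxy
  push Not at hy
  obtain ⟨n, hn, hyn⟩ := hy
  exact ⟨y • n, N.smul_mem y hn, hyn, by rw [smul_smul, hxy n hn]⟩

theorem radical_eq_of_forall_minimalPrimes_le {I P : Ideal R} (hmin : P ∈ I.minimalPrimes)
    (hle : ∀ Q ∈ I.minimalPrimes, Q ≤ P) : I.radical = P := by
  rw [← Ideal.sInf_minimalPrimes]
  exact le_antisymm (sInf_le hmin) (le_sInf fun Q hQ ↦ hmin.2 hQ.1 (hle Q hQ))

theorem radical_annihilator_eq_of_mem_minimalPrimes {N : Submodule R M} {P : Ideal R}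
    (hP : ∀ a : R, ∀ m ∈ N, m ≠ 0 → a • m = 0 → a ∈ P)
    (hmin : P ∈ N.annihilator.minimalPrimes) : N.annihilator.radical = P := by
  refine radical_eq_of_forall_minimalPrimes_le hmin fun Q hQ x hx ↦ ?_
  obtain ⟨m, hmN, hm, hxm⟩ := exists_smul_eq_zero_of_mem_minimalPrimes_annihilator hQ hx
  exact hP x m hmN hm hxm

theorem exists_one_le_pow_le_of_le_radical_of_fg {I J : Ideal R} (hJI : J ≤ I.radical)
    (hJ : J.FG) : ∃ s : ℕ, 1 ≤ s ∧ J ^ s ≤ I := by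
  obtain ⟨n, hn⟩ := Ideal.exists_pow_le_of_le_radical_of_fg hJI hJ
  exact ⟨n + 1, Nat.le_add_left 1 n, (Ideal.pow_le_pow_right n.le_succ).trans hn⟩

theorem pow_le_annihilator_of_minimal_prime_general {N : Submodule R M} {P : Ideal R}
    (hfg : P.FG) (hP : ∀ a : R, ∀ m ∈ N, m ≠ 0 → a • m = 0 → a ∈ P)
    (hmin : P ∈ N.annihilator.minimalPrimes) :
    (∃ s : ℕ, 1 ≤ s ∧ P ^ s ≤ N.annihilator) ∧ N.annihilator.radical = P := by
  have hrad : N.annihilator.radical = P := radical_annihilator_eq_of_mem_minimalPrimes hP hmin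
  exact ⟨exists_one_le_pow_le_of_le_radical_of_fg hrad.ge hfg, hrad⟩

end

/-- In a commutative Noetherian ring, if a prime `P` contains every zero divisor, contains the
annihilator `I` of a subset `U`, and is a minimal prime over `I`, then some power of `P` lies in
`I` and consequently `rad I = P`. -/
theorem pow_le_annihilator_of_minimal_prime
    {R : Type*} [CommRing R] [IsNoetherianRing R] (P : Ideal R) [P.IsPrime]
    (hP : ∀ a b : R, b ≠ 0 → a * b = 0 → a ∈ P)
    (U : Set R) (I : Ideal R) (hI : ∀ a : R, a ∈ I ↔ ∀ u ∈ U, a * u = 0)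
    (hIP : I ≤ P) (hmin : P ∈ I.minimalPrimes) :
    (∃ s : ℕ, 1 ≤ s ∧ P ^ s ≤ I) ∧ I.radical = P := by
  obtain rfl : I = (Submodule.span R U).annihilator := by
    ext a; simp [hI, Submodule.mem_annihilator_span]
  exact pow_le_annihilator_of_minimal_prime_general P.fg_of_isNoetherianRing
    (fun a m _ ↦ hP a m) hmin
end

section
/- Let f : R → S be a homomorphism of commutative rings that makes S into a finitely generated R-module, and let y ∈ R with f(y) ≠ 0. Then the Krull dimension of S/ann_S(f(y)) is at most the Krull dimension of R/ann_R(y), where ann_S(f(y)) = {s ∈ S : s·f(y) = 0} and ann_R(y) = {a ∈ R : a·y = 0}. -/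
section Integral

variable {R S : Type*} [CommRing R] [CommRing S] [Algebra R S] [Algebra.IsIntegral R S]

theorem strictMono_primeSpectrum_comap_of_isIntegral :
    StrictMono (PrimeSpectrum.comap (algebraMap R S)) :=
  fun _ _ hpq ↦ Ideal.IsIntegral.comap_lt_comap (R := R) hpq

variable (R S) in
theorem ringKrullDim_le_of_isIntegral : ringKrullDim S ≤ ringKrullDim R :=
  Order.krullDim_le_of_strictMono _ (strictMono_primeSpectrum_comap_of_isIntegral (R := R))

theorem ringKrullDim_quotient_le_quotient_of_le_comap {I : Ideal R} {J : Ideal S}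
    (hIJ : I ≤ J.comap (algebraMap R S)) :
    ringKrullDim (S ⧸ J) ≤ ringKrullDim (R ⧸ I) :=
  calc
    ringKrullDim (S ⧸ J) ≤ ringKrullDim (R ⧸ J.comap (algebraMap R S)) :=
      ringKrullDim_le_of_isIntegral _ _
    _ ≤ ringKrullDim (R ⧸ I) :=
      ringKrullDim_le_of_surjective _ (Ideal.Quotient.factor_surjective hIJ)

theorem ringKrullDim_quotient_annihilator_le_general (y : R)
    (JS : Ideal S) (hJS : ∀ s : S, s ∈ JS ↔ s * algebraMap R S y = 0)
    (JR : Ideal R) (hJR : ∀ a : R, a ∈ JR ↔ a * y = 0) :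
    ringKrullDim (S ⧸ JS) ≤ ringKrullDim (R ⧸ JR) := by
  have annihilator_le_comap : JR ≤ JS.comap (algebraMap R S) := fun a ha ↦ by
    rw [Ideal.mem_comap, hJS, ← map_mul, (hJR a).1 ha, map_zero]
  exact ringKrullDim_quotient_le_quotient_of_le_comap annihilator_le_comap

end Integral

/-- If `S` is a finitely generated module over `R` via `f = algebraMap R S` and `y ∈ R` has
`f y ≠ 0`, then `dim S/ann_S(f y) ≤ dim R/ann_R(y)`. -/
theorem ringKrullDim_quotient_annihilator_le
    {R S : Type*} [CommRing R] [CommRing S] [Algebra R S] [Module.Finite R S]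
    (y : R) (hy : algebraMap R S y ≠ 0)
    (JS : Ideal S) (hJS : ∀ s : S, s ∈ JS ↔ s * algebraMap R S y = 0)
    (JR : Ideal R) (hJR : ∀ a : R, a ∈ JR ↔ a * y = 0) :
    ringKrullDim (S ⧸ JS) ≤ ringKrullDim (R ⧸ JR) :=
  ringKrullDim_quotient_annihilator_le_general y JS hJS JR hJR
end

section
/- Let k be a field and R a finitely generated commutative k-algebra. If p ⊆ q are prime ideals of R such that the Krull dimension of R/p equals the Krull dimension of R/q, then p = q. -/
section Quotient

variable {R : Type*} [CommRing R] {p I : Ideal R} [p.IsPrime]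

theorem ringKrullDim_quotient_add_one_le_of_lt (h : p < I) :
    ringKrullDim (R ⧸ I) + 1 ≤ ringKrullDim (R ⧸ p) := by
  obtain ⟨x, hxI, hxp⟩ := SetLike.exists_of_lt h
  have mk_mem : Ideal.Quotient.mk p x ∈ nonZeroDivisors (R ⧸ p) :=
    mem_nonZeroDivisors_of_ne_zero (mt Ideal.Quotient.eq_zero_iff_mem.mp hxp)
  exact ringKrullDim_succ_le_of_surjective (Ideal.Quotient.factor h.le)
    (Ideal.Quotient.factor_surjective h.le) mk_mem (Ideal.Quotient.eq_zero_iff_mem.mpr hxI)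

theorem ringKrullDim_quotient_lt_of_lt (h : p < I) (hI : ringKrullDim (R ⧸ I) ≠ ⊤) :
    ringKrullDim (R ⧸ I) < ringKrullDim (R ⧸ p) := by
  have add_one_le := ringKrullDim_quotient_add_one_le_of_lt h
  have nonneg : 0 ≤ ringKrullDim (R ⧸ p) := ringKrullDim_nonneg_of_nontrivial
  match hd : ringKrullDim (R ⧸ I) with
  | ⊥ => exact (WithBot.bot_lt_coe 0).trans_le nonneg
  | ⊤ => exact absurd hd hI
  | (n : ℕ) =>
    rw [hd] at add_one_le
    exact ENat.WithBot.add_one_le_iff.mp add_one_le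

end Quotient

section FiniteType

variable {A : Type*} [CommRing A]

theorem ringKrullDim_polynomial_ne_top (hA : ringKrullDim A ≠ ⊤) :
    ringKrullDim (Polynomial A) ≠ ⊤ := by
  refine ne_top_of_le_ne_top ?_ Polynomial.ringKrullDim_le
  match hd : ringKrullDim A with
  | ⊥ => simp
  | ⊤ => exact absurd hd hA
  | (n : ℕ) => exact WithBot.coe_inj.not.mpr (ENat.natCast_ne_top (2 * n + 1))

theorem ringKrullDim_mvPolynomial_ne_top (σ : Type*) [Finite σ] (hA : ringKrullDim A ≠ ⊤) :
    ringKrullDim (MvPolynomial σ A) ≠ ⊤ := by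
  induction σ using Finite.induction_empty_option with
  | of_equiv e ih =>
    rwa [← ringKrullDim_eq_of_ringEquiv (MvPolynomial.renameEquiv A e).toRingEquiv]
  | h_empty => rwa [ringKrullDim_mvPolynomial_of_isEmpty]
  | h_option ih =>
    rw [ringKrullDim_eq_of_ringEquiv (MvPolynomial.optionEquivLeft A _).toRingEquiv]
    exact ringKrullDim_polynomial_ne_top ih

theorem ringKrullDim_ne_top_of_finiteType {B : Type*} [CommRing B] [Algebra A B]
    [hB : Algebra.FiniteType A B] (hA : ringKrullDim A ≠ ⊤) : ringKrullDim B ≠ ⊤ := by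
  obtain ⟨n, f, hf⟩ := Algebra.FiniteType.iff_quotient_mvPolynomial''.mp hB
  exact ne_top_of_le_ne_top (ringKrullDim_mvPolynomial_ne_top (Fin n) hA)
    (ringKrullDim_le_of_surjective f.toRingHom hf)

end FiniteType

theorem prime_eq_of_le_of_ringKrullDim_quotient_eq_general
    {R : Type*} [CommRing R] (p q : Ideal R) [p.IsPrime] (hpq : p ≤ q)
    (hq : ringKrullDim (R ⧸ q) ≠ ⊤) (hdim : ringKrullDim (R ⧸ p) = ringKrullDim (R ⧸ q)) :
    p = q := by
  by_contra hne
  exact (ringKrullDim_quotient_lt_of_lt (hpq.lt_of_ne hne) hq).ne' hdim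

/-- In a finitely generated commutative algebra over a field, nested primes with quotients of the
same Krull dimension coincide. -/
theorem prime_eq_of_le_of_ringKrullDim_quotient_eq
    {k R : Type*} [Field k] [CommRing R] [Algebra k R] [Algebra.FiniteType k R]
    (p q : Ideal R) [p.IsPrime] [q.IsPrime] (hpq : p ≤ q)
    (hdim : ringKrullDim (R ⧸ p) = ringKrullDim (R ⧸ q)) :
    p = q := by
  have hq : ringKrullDim (R ⧸ q) ≠ ⊤ :=
    ringKrullDim_ne_top_of_finiteType (A := k) ringKrullDim_ne_top
  exact prime_eq_of_le_of_ringKrullDim_quotient_eq_general p q hpq hq hdim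
end
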